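/- arXiv:2310.16422 — 2 statements merged into one kernel-verified Lean document; each statement's English description precedes it below -/
import Mathlib

section
/- Let α, β : X ⇉ Y be surjective m-fibrations between m-pathwise connected spaces. If α and β are m-homotopic, then tmc(α) = tmc(β). -/
/-!
The value `tmcMap α` is the m-homotopic distance between `p ↦ α p.1` and the second projection, so
it suffices that m-homotopy is symmetric and transitive and that the m-homotopy between `α` and `β`
can be pulled back along `X × Y → X` and restricted to each set of a cover: any cover that works for
one of `α`, `β` then works for the other.

Transitivity is the gluing of two m-homotopies at time `1/2`. It is reduced to the pasting lemma for
ordinary continuous maps: an m-function `A ⇉ B` is m-continuous exactly when it is continuous as a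
map into `Set B` with the Vietoris topology (`mContinuous_iff_continuous`).
-/

/-- An m-function assigns to each point a nonempty subset. -/
def IsMFun {A B : Type*} (F : A → Set B) : Prop :=
  ∀ a, (F a).Nonempty

/-- Upper semicontinuity of a multi-valued function. -/
def UpperSC {A B : Type*} [TopologicalSpace A] [TopologicalSpace B]
    (F : A → Set B) : Prop :=
  ∀ V : Set B, IsOpen V → IsOpen {a : A | F a ⊆ V}

/-- Lower semicontinuity of a multi-valued function. -/
def LowerSC {A B : Type*} [TopologicalSpace A] [TopologicalSpace B]
    (F : A → Set B) : Prop :=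
  ∀ V : Set B, IsOpen V → IsOpen {a : A | (F a ∩ V).Nonempty}

/-- m-continuity: both upper and lower semicontinuous. -/
def MContinuous {A B : Type*} [TopologicalSpace A] [TopologicalSpace B]
    (F : A → Set B) : Prop :=
  UpperSC F ∧ LowerSC F

/-- Composition of multi-valued functions: (β ∘ α)(a) = ⋃_{b ∈ α(a)} β(b). -/
def MComp {A B C : Type*} (G : B → Set C) (F : A → Set B) : A → Set C :=
  fun a => ⋃ b ∈ F a, G b

/-- The m-identity map 1_A(a) = {a}. -/
def MId (A : Type*) : A → Set A := fun a => {a}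

/-- Two m-functions are m-homotopic if they are connected by an m-continuous
m-homotopy γ : A × [0,1] ⇉ B. -/
def MHomotopic {A B : Type*} [TopologicalSpace A] [TopologicalSpace B]
    (F G : A → Set B) : Prop :=
  ∃ γ : A × unitInterval → Set B, IsMFun γ ∧ MContinuous γ ∧
    (∀ a, γ (a, 0) = F a) ∧ (∀ a, γ (a, 1) = G a)

/-- Null m-homotopic: m-homotopic to an m-constant map. -/
def MNullHomotopic {A B : Type*} [TopologicalSpace A] [TopologicalSpace B]
    (F : A → Set B) : Prop :=
  ∃ S : Set B, S.Nonempty ∧ MHomotopic F (fun _ => S)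

/-- m-contractible: the m-identity is null m-homotopic. -/
def MContractible (A : Type*) [TopologicalSpace A] : Prop :=
  MNullHomotopic (MId A)

/-- An m-homotopy equivalence. -/
def MHomotopyEquiv {A B : Type*} [TopologicalSpace A] [TopologicalSpace B]
    (F : A → Set B) : Prop :=
  IsMFun F ∧ MContinuous F ∧ ∃ G : B → Set A, IsMFun G ∧ MContinuous G ∧
    MHomotopic (MComp G F) (MId A) ∧ MHomotopic (MComp F G) (MId B)

/-- Surjectivity of an m-function. -/
def MSurjective {A B : Type*} (F : A → Set B) : Prop :=
  (⋃ a, F a) = Set.univ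

/-- m-pathwise connectedness: any two nonempty closed subsets are joined by an
m-continuous m-path. -/
def MPathConnected (X : Type*) [TopologicalSpace X] : Prop :=
  ∀ A₀ A₁ : Set X, A₀.Nonempty → A₁.Nonempty → IsClosed A₀ → IsClosed A₁ →
    ∃ α : unitInterval → Set X, IsMFun α ∧ MContinuous α ∧ α 0 = A₀ ∧ α 1 = A₁

/-- The m-homotopy lifting property with respect to a space `W`. -/
def MHLP {A B : Type*} [TopologicalSpace A] [TopologicalSpace B]
    (ρ : A → Set B) (W : Type*) [TopologicalSpace W] : Prop :=
  ∀ α : W → Set A, IsMFun α → MContinuous α →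
  ∀ β : W × unitInterval → Set B, IsMFun β → MContinuous β →
    (∀ w, β (w, 0) = MComp ρ α w) →
    ∃ η : W × unitInterval → Set A, IsMFun η ∧ MContinuous η ∧
      (∀ w, η (w, 0) = α w) ∧ (∀ p, MComp ρ η p = β p)

/-- An m-fibration: an m-continuous m-function with the m-homotopy lifting
property with respect to every topological space. -/
def MFibration {A B : Type*} [TopologicalSpace A] [TopologicalSpace B]
    (ρ : A → Set B) : Prop :=
  IsMFun ρ ∧ MContinuous ρ ∧
    ∀ (W : Type*) [TopologicalSpace W], MHLP ρ W

/-- The m-homotopic distance between two m-functions. -/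
noncomputable def mDist {X Y : Type*} [TopologicalSpace X] [TopologicalSpace Y]
    (F G : X → Set Y) : ℕ∞ :=
  sInf {n : ℕ∞ | ∃ s : ℕ, n = s ∧ 1 ≤ s ∧ ∃ C : Fin s → Set X,
    (∀ i, IsOpen (C i)) ∧ (⋃ i, C i) = Set.univ ∧
    ∀ i, MHomotopic (fun c : C i => F c.1) (fun c : C i => G c.1)}

/-- Topological multi-complexity of a space. -/
noncomputable def tmc (X : Type*) [TopologicalSpace X] : ℕ∞ :=
  mDist (fun p : X × X => ({p.1} : Set X)) (fun p : X × X => ({p.2} : Set X))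

/-- Topological multi-complexity of a (surjective) m-fibration `α : X ⇉ Y`. -/
noncomputable def tmcMap {X Y : Type*} [TopologicalSpace X] [TopologicalSpace Y]
    (α : X → Set Y) : ℕ∞ :=
  mDist (MComp α (fun p : X × Y => ({p.1} : Set X)))
    (fun p : X × Y => ({p.2} : Set Y))

/-- Lusternik–Schnirelmann multi-category of a space. -/
noncomputable def catm (X : Type*) [TopologicalSpace X] : ℕ∞ :=
  sInf {n : ℕ∞ | ∃ s : ℕ, n = s ∧ 1 ≤ s ∧ ∃ D : Fin s → Set X,
    (∀ i, IsOpen (D i)) ∧ (⋃ i, D i) = Set.univ ∧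
    ∀ i, MNullHomotopic (fun d : D i => ({d.1} : Set X))}

/-- Lusternik–Schnirelmann multi-category of an m-function `α : X ⇉ Y`. -/
noncomputable def catmMap {X Y : Type*} [TopologicalSpace X] [TopologicalSpace Y]
    (α : X → Set Y) : ℕ∞ :=
  sInf {n : ℕ∞ | ∃ s : ℕ, n = s ∧ 1 ≤ s ∧ ∃ D : Fin s → Set X,
    (∀ i, IsOpen (D i)) ∧ (⋃ i, D i) = Set.univ ∧
    ∀ i, MNullHomotopic (fun d : D i => α d.1)}

theorem mContinuous_iff_continuous {A B : Type*} [TopologicalSpace A] [TopologicalSpace B]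
    (F : A → Set B) : MContinuous F ↔ @Continuous A (Set B) _ (TopologicalSpace.vietoris B) F := by
  unfold TopologicalSpace.vietoris
  rw [continuous_generateFrom_iff]
  constructor
  · rintro ⟨hu, hl⟩ U (⟨V, hV, rfl⟩ | ⟨V, hV, rfl⟩)
    · exact hu V hV
    · exact hl V hV
  · intro h
    exact ⟨fun V hV => h _ (Or.inl ⟨V, hV, rfl⟩), fun V hV => h _ (Or.inr ⟨V, hV, rfl⟩)⟩

theorem MContinuous.comp_continuous {A B C : Type*} [TopologicalSpace A] [TopologicalSpace B]
    [TopologicalSpace C] {F : B → Set C} (hF : MContinuous F) {g : A → B} (hg : Continuous g) :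
    MContinuous (fun a => F (g a)) :=
  ⟨fun V hV => (hF.1 V hV).preimage hg, fun V hV => (hF.2 V hV).preimage hg⟩

theorem MHomotopic.symm {A B : Type*} [TopologicalSpace A] [TopologicalSpace B]
    {F G : A → Set B} (h : MHomotopic F G) : MHomotopic G F := by
  obtain ⟨γ, hn, hc, h0, h1⟩ := h
  refine ⟨fun p => γ (p.1, unitInterval.symm p.2), fun p => hn _, hc.comp_continuous (by fun_prop),
    fun a => ?_, fun a => ?_⟩
  · simp [h1]
  · simp [h0]

theorem MHomotopic.comp_continuous {A B C : Type*} [TopologicalSpace A] [TopologicalSpace B]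
    [TopologicalSpace C] {F G : B → Set C} (h : MHomotopic F G) {g : A → B} (hg : Continuous g) :
    MHomotopic (fun a => F (g a)) (fun a => G (g a)) := by
  obtain ⟨γ, hn, hc, h0, h1⟩ := h
  exact ⟨fun p => γ (g p.1, p.2), fun p => hn _, hc.comp_continuous (by fun_prop),
    fun a => h0 _, fun a => h1 _⟩

theorem MHomotopic.trans {A B : Type*} [TopologicalSpace A] [TopologicalSpace B]
    {F G H : A → Set B} (h : MHomotopic F G) (hGH : MHomotopic G H) : MHomotopic F H := by
  obtain ⟨γ, hn, hc, h0, h1⟩ := h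
  obtain ⟨δ, kn, kc, k0, k1⟩ := hGH
  -- Projecting onto `[0,1]` makes both reparametrizations `2t` and `2t - 1` total.
  let P : ℝ → unitInterval := Set.projIcc 0 1 zero_le_one
  have hP : Continuous P := continuous_projIcc
  have hP0 : P 0 = 0 := Set.projIcc_left _
  have hP1 : P 1 = 1 := Set.projIcc_right _
  refine ⟨fun p => if (p.2 : ℝ) ≤ 1 / 2 then γ (p.1, P (2 * p.2)) else δ (p.1, P (2 * p.2 - 1)),
    ?_, ?_, fun a => ?_, fun a => ?_⟩
  · intro p
    dsimp only
    split_ifs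
    · exact hn _
    · exact kn _
  · rw [mContinuous_iff_continuous]
    let := TopologicalSpace.vietoris B
    refine Continuous.if_le ?_ ?_ (by fun_prop) continuous_const ?_
    · exact (mContinuous_iff_continuous _).1 (hc.comp_continuous (by fun_prop))
    · exact (mContinuous_iff_continuous _).1 (kc.comp_continuous (by fun_prop))
    · intro p hp
      have e1 : (2 * (p.2 : ℝ)) = 1 := by rw [hp]; norm_num
      rw [e1, sub_self, hP0, hP1, h1, k0]
  · have e : ((0 : unitInterval) : ℝ) ≤ 1 / 2 := by norm_num
    simp only [if_pos e]
    simp [hP0, h0]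
  · have e : ¬ ((1 : unitInterval) : ℝ) ≤ 1 / 2 := by norm_num
    have e2 : (2 * ((1 : unitInterval) : ℝ) - 1) = 1 := by norm_num
    simp only [if_neg e, e2, hP1, k1]

theorem mDist_le_of_mHomotopic {X Y : Type*} [TopologicalSpace X] [TopologicalSpace Y]
    {F F₁ : X → Set Y} (G : X → Set Y) (h : MHomotopic F F₁) : mDist F G ≤ mDist F₁ G := by
  refine sInf_le_sInf ?_
  rintro n ⟨s, hn, hs, C, hC, hU, hH⟩
  exact ⟨s, hn, hs, C, hC, hU, fun i =>
    (h.comp_continuous (g := fun c : C i => c.1) continuous_subtype_val).trans (hH i)⟩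

/-- m-homotopic surjective m-fibrations have equal topological
multi-complexity. -/
theorem tmcMap_congr {X Y : Type*} [TopologicalSpace X] [TopologicalSpace Y]
    (hX : MPathConnected X) (hY : MPathConnected Y)
    (α β : X → Set Y)
    (hα : MFibration α) (hβ : MFibration β)
    (hαs : MSurjective α) (hβs : MSurjective β)
    (h : MHomotopic α β) :
    tmcMap α = tmcMap β := by
  have key : MHomotopic (MComp α (fun p : X × Y => ({p.1} : Set X)))
      (MComp β (fun p : X × Y => ({p.1} : Set X))) := by
    have e : ∀ F : X → Set Y,
        MComp F (fun p : X × Y => ({p.1} : Set X)) = fun p => F p.1 := by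
      intro F
      funext p
      simp [MComp]
    rw [e, e]
    exact h.comp_continuous continuous_fst
  exact le_antisymm (mDist_le_of_mHomotopic _ key) (mDist_le_of_mHomotopic _ key.symm)
end

section
/- Let X and Y be m-pathwise connected topological spaces and let α : X ⇉ Y be an m-continuous m-function. Then catm(α) ≤ catm(X). -/
theorem IsMFun.mComp {A B C : Type*} {G : B → Set C} {F : A → Set B}
    (hG : IsMFun G) (hF : IsMFun F) : IsMFun (MComp G F) := by
  intro a
  obtain ⟨b, hb⟩ := hF a
  obtain ⟨c, hc⟩ := hG b
  exact ⟨c, Set.mem_biUnion hb hc⟩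

theorem MContinuous.mComp {A B C : Type*} [TopologicalSpace A] [TopologicalSpace B]
    [TopologicalSpace C] {G : B → Set C} {F : A → Set B}
    (hG : MContinuous G) (hF : MContinuous F) : MContinuous (MComp G F) := by
  refine ⟨fun V hV => ?_, fun V hV => ?_⟩
  · convert hF.1 _ (hG.1 V hV) using 1
    ext a
    simp only [MComp, Set.mem_ofPred_eq, Set.iUnion_subset_iff]
    rfl
  · convert hF.2 _ (hG.2 V hV) using 1
    ext a
    constructor
    · rintro ⟨c, hc, hcV⟩
      obtain ⟨b, hb, hbc⟩ := Set.mem_iUnion₂.1 hc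
      exact ⟨b, hb, c, hbc, hcV⟩
    · rintro ⟨b, hb, c, hbc, hcV⟩
      exact ⟨c, Set.mem_biUnion hb hbc, hcV⟩

theorem MNullHomotopic.mComp {A B C : Type*} [TopologicalSpace A] [TopologicalSpace B]
    [TopologicalSpace C] {G : B → Set C} {F : A → Set B} (hGm : IsMFun G) (hG : MContinuous G)
    (hF : MNullHomotopic F) : MNullHomotopic (MComp G F) := by
  obtain ⟨S, ⟨x, hx⟩, γ, hγm, hγ, h0, h1⟩ := hF
  obtain ⟨y, hy⟩ := hGm x
  exact ⟨⋃ b ∈ S, G b, ⟨y, Set.mem_biUnion hx hy⟩, MComp G γ, hGm.mComp hγm, hG.mComp hγ,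
    fun a => by simp only [MComp, h0], fun a => by simp only [MComp, h1]⟩

/-- catm(α) ≤ catm(X). -/
theorem catmMap_le_catm_domain {X Y : Type*}
    [TopologicalSpace X] [TopologicalSpace Y]
    (hX : MPathConnected X) (hY : MPathConnected Y)
    (α : X → Set Y) (hαm : IsMFun α) (hα : MContinuous α) :
    catmMap α ≤ catm X := by
  unfold catmMap catm
  apply sInf_le_sInf
  rintro n ⟨s, hn, hs, D, hDo, hDc, hD⟩
  refine ⟨s, hn, hs, D, hDo, hDc, fun i => ?_⟩
  have h := (hD i).mComp hαm hα
  convert h using 1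
  funext d
  simp only [MComp, Set.biUnion_singleton]
end
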